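/- Every reflection factorization of a Coxeter element of G4 of length at least four that contains reflections from both conjugacy classes R₁ and R₂ has, in its Hurwitz orbit, a factorization with two consecutive equal entries. -/

import Mathlib

noncomputable section

open Matrix Complex

/-- The `i`-th Hurwitz move on length-`k` tuples of group elements. -/
def IsHurwitzMove {G : Type*} [Group G] {k : ℕ} (t t' : Fin k → G) : Prop :=
  ∃ i : ℕ, ∃ h : i + 1 < k,
    t' ⟨i, Nat.lt_of_succ_lt h⟩ = t ⟨i + 1, h⟩ ∧
    t' ⟨i + 1, h⟩ = (t ⟨i + 1, h⟩)⁻¹ * t ⟨i, Nat.lt_of_succ_lt h⟩ * t ⟨i + 1, h⟩ ∧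
    ∀ j : Fin k, (j : ℕ) ≠ i → (j : ℕ) ≠ i + 1 → t' j = t j

/-- Two tuples lie in the same Hurwitz orbit. -/
def SameHurwitzOrbit {G : Type*} [Group G] {k : ℕ} (t t' : Fin k → G) : Prop :=
  Relation.EqvGen IsHurwitzMove t t'

/-- A group element `r` appears (as an entry) in the Hurwitz orbit of the tuple `t`. -/
def Appears {G : Type*} [Group G] {k : ℕ} (r : G) (t : Fin k → G) : Prop :=
  ∃ s : Fin k → G, SameHurwitzOrbit t s ∧ ∃ j, s j = r

/-- A tuple has two consecutive equal entries. -/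
def HasConsecutiveEqualPair {G : Type*} [Group G] {k : ℕ} (t : Fin k → G) : Prop :=
  ∃ i : ℕ, ∃ h : i + 1 < k, t ⟨i, Nat.lt_of_succ_lt h⟩ = t ⟨i + 1, h⟩

/-- Replace the `p`-th entry of a tuple by two consecutive copies of its square. -/
def doubleAt {G : Type*} [Group G] {m : ℕ} (t : Fin m → G) (p : Fin m) : Fin (m + 1) → G :=
  fun j =>
    if h1 : (j : ℕ) < (p : ℕ) then t ⟨j, h1.trans p.isLt⟩
    else if h2 : (j : ℕ) ≤ (p : ℕ) + 1 then (t p) ^ 2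
    else t ⟨(j : ℕ) - 1, by have := j.isLt; omega⟩

/-- `ω = e^(2πi/3)`. -/
def ω : ℂ := Complex.exp (2 * Real.pi * Complex.I / 3)

def AMat : Matrix (Fin 2) (Fin 2) ℂ := !![1, 0; 0, ω]

def BMat : Matrix (Fin 2) (Fin 2) ℂ :=
  !![(ω - ω ^ 2) / 3, ω ^ 2; (-2 * ω ^ 2) / 3, (-ω - 2 * ω ^ 2) / 3]

/-- The complex reflection group G₄ as the subgroup of GL(2,ℂ) generated by `AMat`, `BMat`. -/
def G4 : Subgroup (GL (Fin 2) ℂ) :=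
  Subgroup.closure {g : GL (Fin 2) ℂ |
    (g : Matrix (Fin 2) (Fin 2) ℂ) = AMat ∨ (g : Matrix (Fin 2) (Fin 2) ℂ) = BMat}

/-- The matrix underlying an element of G₄. -/
def mat (t : G4) : Matrix (Fin 2) (Fin 2) ℂ := ((t : GL (Fin 2) ℂ) : Matrix (Fin 2) (Fin 2) ℂ)

/-- A reflection in G₄: a non-identity element with eigenvalue 1. -/
def IsReflection (t : G4) : Prop := t ≠ 1 ∧ (mat t - 1).det = 0

/-- The conjugacy class R₁ of reflections of determinant ω. -/
def R1 : Set G4 := {t | IsReflection t ∧ (mat t).det = ω}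

/-- The conjugacy class R₂ of reflections of determinant ω². -/
def R2 : Set G4 := {t | IsReflection t ∧ (mat t).det = ω ^ 2}

/-- A Coxeter element of G₄: an element with a primitive 6th root of unity as eigenvalue. -/
def IsCoxeter (c : G4) : Prop :=
  ∃ ζ : ℂ, IsPrimitiveRoot ζ 6 ∧ (mat c - ζ • (1 : Matrix (Fin 2) (Fin 2) ℂ)).det = 0

/-- The relators of G₅: a³, b³, abab(baba)⁻¹. -/
def g5Rels : Set (FreeGroup (Fin 2)) :=
  {FreeGroup.of 0 ^ 3, FreeGroup.of 1 ^ 3,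
    FreeGroup.of 0 * FreeGroup.of 1 * FreeGroup.of 0 * FreeGroup.of 1 *
      (FreeGroup.of 1 * FreeGroup.of 0 * FreeGroup.of 1 * FreeGroup.of 0)⁻¹}

/-- The complex reflection group G₅, by its presentation ⟨a,b | a³ = b³ = 1, abab = baba⟩. -/
abbrev G5 := PresentedGroup g5Rels

def ga : G5 := PresentedGroup.of 0
def gb : G5 := PresentedGroup.of 1

/-- The conjugacy class of `a` in G₅. -/
def S1 : Set G5 := {t | IsConj ga t}
/-- The conjugacy class of `b` in G₅. -/
def S2 : Set G5 := {t | IsConj gb t}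
/-- The conjugacy class of `a²` in G₅. -/
def S3 : Set G5 := {t | IsConj (ga ^ 2) t}
/-- The conjugacy class of `b²` in G₅. -/
def S4 : Set G5 := {t | IsConj (gb ^ 2) t}

/-- A reflection in G₅: a conjugate of a, b, a², or b². -/
def IsReflection5 (t : G5) : Prop := t ∈ S1 ∨ t ∈ S2 ∨ t ∈ S3 ∨ t ∈ S4

/-- A Coxeter element of G₅: an element of order 12. -/
def IsCoxeter5 (c : G5) : Prop := orderOf c = 12

theorem w_sq : ω ^ 2 = -1 - ω := by
  have h : IsPrimitiveRoot ω 3 := by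
    have := Complex.isPrimitiveRoot_exp 3 (by norm_num)
    simpa [ω] using this
  have h3 : ω ^ 3 = 1 := h.pow_eq_one
  have h1 : ω ≠ 1 := h.ne_one (by norm_num)
  have : (ω - 1) * (ω ^ 2 + ω + 1) = 0 := by linear_combination h3
  rcases mul_eq_zero.1 this with h' | h'
  · exact absurd (sub_eq_zero.1 h') h1
  · linear_combination h'

theorem int_w (u v : ℤ) (h : (u : ℂ) + v * ω = 0) : u = 0 ∧ v = 0 := by
  have h1 : ((u * u - u * v + v * v : ℤ) : ℂ) = 0 := by
    push_cast
    linear_combination (u - v - v * ω : ℂ) * h + (v * v : ℂ) * w_sq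
  have h2 : u * u - u * v + v * v = 0 := by exact_mod_cast h1
  constructor
  · nlinarith [sq_nonneg (u - v), sq_nonneg u, sq_nonneg v, sq_nonneg (u + v), sq_nonneg (2 * v - u)]
  · nlinarith [sq_nonneg (u - v), sq_nonneg u, sq_nonneg v, sq_nonneg (u + v), sq_nonneg (2 * u - v)]

/-- Matrices over `ℤ[ω]`, coded by integers. -/
structure M8 where
  a : ℤ
  a' : ℤ
  b : ℤ
  b' : ℤ
  c : ℤ
  c' : ℤ
  d : ℤ
  d' : ℤ
deriving DecidableEq

namespace M8

def mulM (x y : M8) : M8 :=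
  ⟨x.a * y.a - x.a' * y.a' + (x.b * y.c - x.b' * y.c'),
   x.a * y.a' + x.a' * y.a - x.a' * y.a' + (x.b * y.c' + x.b' * y.c - x.b' * y.c'),
   x.a * y.b - x.a' * y.b' + (x.b * y.d - x.b' * y.d'),
   x.a * y.b' + x.a' * y.b - x.a' * y.b' + (x.b * y.d' + x.b' * y.d - x.b' * y.d'),
   x.c * y.a - x.c' * y.a' + (x.d * y.c - x.d' * y.c'),
   x.c * y.a' + x.c' * y.a - x.c' * y.a' + (x.d * y.c' + x.d' * y.c - x.d' * y.c'),
   x.c * y.b - x.c' * y.b' + (x.d * y.d - x.d' * y.d'),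
   x.c * y.b' + x.c' * y.b - x.c' * y.b' + (x.d * y.d' + x.d' * y.d - x.d' * y.d')⟩

def oneM : M8 := ⟨1, 0, 0, 0, 0, 0, 1, 0⟩

def ev (x : M8) : Matrix (Fin 2) (Fin 2) ℂ :=
  !![(x.a : ℂ) + x.a' * ω, (x.b : ℂ) + x.b' * ω; (x.c : ℂ) + x.c' * ω, (x.d : ℂ) + x.d' * ω]

theorem ev_mul (x y : M8) : ev (mulM x y) = ev x * ev y := by
  have h := w_sq
  ext i j
  fin_cases i <;> fin_cases j <;> simp [ev, mulM, Matrix.mul_apply, Fin.sum_univ_two]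
  · linear_combination (-x.a' * y.a' - x.b' * y.c' : ℂ) * h
  · linear_combination (-x.a' * y.b' - x.b' * y.d' : ℂ) * h
  · linear_combination (-x.c' * y.a' - x.d' * y.c' : ℂ) * h
  · linear_combination (-x.c' * y.b' - x.d' * y.d' : ℂ) * h

theorem ev_one : ev oneM = 1 := by
  ext i j
  fin_cases i <;> fin_cases j <;> simp [ev, oneM]

theorem int_w2 (u v u' v' : ℤ) (h : (u : ℂ) + v * ω = u' + v' * ω) : u = u' ∧ v = v' := by
  have := int_w (u - u') (v - v') (by push_cast; linear_combination h)
  omega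

theorem ev_inj {x y : M8} (h : ev x = ev y) : x = y := by
  have h00 := congrFun (congrFun h 0) 0
  have h01 := congrFun (congrFun h 0) 1
  have h10 := congrFun (congrFun h 1) 0
  have h11 := congrFun (congrFun h 1) 1
  simp only [ev, Matrix.of_apply, Matrix.cons_val', Matrix.cons_val_zero, Matrix.cons_val_one,
    Matrix.cons_val_fin_one] at h00 h01 h10 h11
  obtain ⟨e1, e2⟩ := int_w2 _ _ _ _ h00
  obtain ⟨e3, e4⟩ := int_w2 _ _ _ _ h01
  obtain ⟨e5, e6⟩ := int_w2 _ _ _ _ h10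
  obtain ⟨e7, e8⟩ := int_w2 _ _ _ _ h11
  cases x; cases y; simp_all

def PM : Matrix (Fin 2) (Fin 2) ℂ := !![0, -ω; 1, (-ω - 2) / 3]

theorem PM_det : IsUnit PM.det := by
  have : PM.det = ω := by simp [PM, Matrix.det_fin_two]
  rw [this, isUnit_iff_ne_zero]
  intro h0
  have := w_sq
  rw [h0] at this
  norm_num at this

def elts : List M8 := [
  ⟨1, 0, 0, 0, 0, 0, 1, 0⟩,
  ⟨0, 1, 1, 0, 0, 0, 1, 0⟩,
  ⟨1, 0, 0, 0, 0, -1, 0, 1⟩,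
  ⟨-1, -1, 1, 1, 0, 0, 1, 0⟩,
  ⟨0, 0, 0, 1, 0, -1, 0, 1⟩,
  ⟨0, 1, 1, 0, 1, 1, 0, 0⟩,
  ⟨1, 0, 0, 0, 1, 0, -1, -1⟩,
  ⟨0, -1, -1, 0, 0, -1, 0, 1⟩,
  ⟨0, 0, 0, 1, 1, 1, 0, 0⟩,
  ⟨1, 1, -1, -1, 1, 0, -1, -1⟩,
  ⟨-1, -1, 1, 1, -1, 0, 1, 1⟩,
  ⟨0, 1, 1, 0, 0, 1, 0, -1⟩,
  ⟨1, 1, -1, -1, 1, 1, 0, 0⟩,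
  ⟨0, 0, 0, -1, 1, 0, -1, -1⟩,
  ⟨0, 0, 0, 1, -1, 0, 1, 1⟩,
  ⟨-1, 0, 0, 0, 0, 1, 0, -1⟩,
  ⟨0, -1, -1, 0, 0, 0, -1, 0⟩,
  ⟨-1, -1, 1, 1, -1, -1, 0, 0⟩,
  ⟨-1, 0, 0, 0, -1, 0, 1, 1⟩,
  ⟨0, 0, 0, -1, 0, 1, 0, -1⟩,
  ⟨1, 1, -1, -1, 0, 0, -1, 0⟩,
  ⟨0, -1, -1, 0, -1, -1, 0, 0⟩,
  ⟨-1, 0, 0, 0, 0, 0, -1, 0⟩,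
  ⟨0, 0, 0, -1, -1, -1, 0, 0⟩]

def refs : Fin 8 → M8
  | 0 => ⟨0, 1, 1, 0, 0, 0, 1, 0⟩
  | 1 => ⟨1, 0, 0, 0, 0, -1, 0, 1⟩
  | 2 => ⟨-1, -1, 1, 1, 0, 0, 1, 0⟩
  | 3 => ⟨1, 0, 0, 0, 1, 0, -1, -1⟩
  | 4 => ⟨1, 1, -1, -1, 1, 1, 0, 0⟩
  | 5 => ⟨0, 0, 0, 1, -1, 0, 1, 1⟩
  | 6 => ⟨0, 0, 0, -1, 0, 1, 0, -1⟩
  | 7 => ⟨0, -1, -1, 0, -1, -1, 0, 0⟩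

theorem elts_mul : ∀ x ∈ elts, ∀ y ∈ elts, mulM x y ∈ elts := by decide +kernel

theorem elts_inv : ∀ x ∈ elts, ∃ y ∈ elts, mulM x y = oneM := by decide +kernel

/-- Determinant of `x - 1`, integer coordinates. -/
def chi (x : M8) : ℤ × ℤ :=
  ((x.a - 1) * (x.d - 1) - x.a' * x.d' - (x.b * x.c - x.b' * x.c'),
   (x.a - 1) * x.d' + x.a' * (x.d - 1) - x.a' * x.d' - (x.b * x.c' + x.b' * x.c - x.b' * x.c'))

theorem elts_ref : ∀ x ∈ elts, x ≠ oneM → chi x = (0, 0) → ∃ i, x = refs i := by decide +kernel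

def op (x y : Fin 8) : Fin 8 :=
  ⟨(5876133911824562215213422570253391265032231857359458539560 >>> (24 * x.val + 3 * y.val)) % 8,
    Nat.mod_lt _ (by norm_num)⟩

theorem refs_op : ∀ x y, mulM (refs y) (refs (op x y)) = mulM (refs x) (refs y) := by
  decide +kernel

def hasPair : List (Fin 8) → Bool
  | x :: y :: l => Nat.beq x.val y.val || hasPair (y :: l)
  | _ => false

/-- The `i`-th Hurwitz move on codes (identity out of range), in continuation style. -/
def mv {α : Type} : ℕ → List (Fin 8) → (List (Fin 8) → α) → α
  | 0, x :: y :: l, k => k (y :: op x y :: l)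
  | i + 1, x :: l, k => mv i l fun r => k (x :: r)
  | _, l, k => k l

/-- Apply a word of moves, then look for a pair. -/
def run : List ℕ → List (Fin 8) → Bool
  | [], l => hasPair l
  | i :: w, l => mv i l fun r => run w r

def words4 : List (List ℕ) :=
  [[], [0, 2, 1], [1, 0, 2], [0, 0, 2, 2, 1], [0, 0, 1, 1], [0, 2, 1, 1], [1, 1, 0, 2], [2, 2, 1]]

def words5 : List (List ℕ) :=
  [[3, 2, 2, 1], [1, 3, 2, 1], [1, 2, 3], [1, 3, 3, 2], [0, 1, 2, 2], [2, 1, 3], [3, 2, 1, 1]]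

def words3 : List (List ℕ) := [[], [0], [1], [0, 0], [0, 1], [1, 0], [1, 1]]

def srch (ws : List (List ℕ)) (l : List (Fin 8)) : Bool := ws.any fun w => run w l

theorem main_check : ∀ a b c : Fin 8, srch words3 [a, b, c] = true ∨ ∀ d : Fin 8,
    srch words4 [a, b, c, d] = true ∨
    (mulM (mulM (mulM (refs a) (refs b)) (refs c)) (refs d) = oneM ∧
      ∀ e : Fin 8, srch words5 [a, b, c, d, e] = true) := by
  decide +kernel

theorem mat_mul (g h : G4) : mat (g * h) = mat g * mat h := by simp [mat]

theorem mat_inj {g h : G4} (e : mat g = mat h) : g = h := by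
  apply Subtype.ext
  exact Units.ext e

def Code (g : G4) (x : M8) : Prop := mat g * PM = PM * ev x

theorem Code.mul {g h : G4} {x y : M8} (hg : Code g x) (hh : Code h y) :
    Code (g * h) (mulM x y) := by
  unfold Code at *
  rw [mat_mul, ev_mul, Matrix.mul_assoc, hh, ← Matrix.mul_assoc, hg, Matrix.mul_assoc]

theorem Code.one : Code 1 oneM := by
  simp [Code, ev_one, mat]

theorem Code.inj {g h : G4} {x : M8} (hg : Code g x) (hh : Code h x) : g = h := by
  apply mat_inj
  unfold Code at *
  rw [← hh] at hg
  have := congrArg (· * PM⁻¹) hg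
  simpa [Matrix.mul_assoc, Matrix.mul_nonsing_inv _ PM_det] using this

theorem Code.ev_eq {g : G4} {x y : M8} (hg : Code g x) (hh : Code g y) : x = y := by
  apply ev_inj
  unfold Code at *
  rw [hh] at hg
  have := congrArg (PM⁻¹ * ·) hg
  simpa [← Matrix.mul_assoc, Matrix.nonsing_inv_mul _ PM_det] using this.symm

theorem gen_A (M : Matrix (Fin 2) (Fin 2) ℂ) (h : M = AMat) : M * PM = PM * ev (refs 0) := by
  have h2 := w_sq
  rw [h]
  ext i j
  fin_cases i <;> fin_cases j <;>
    simp [AMat, PM, ev, refs, Matrix.mul_apply, Fin.sum_univ_two]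
  linear_combination (-1 / 3 : ℂ) * h2

theorem gen_B (M : Matrix (Fin 2) (Fin 2) ℂ) (h : M = BMat) : M * PM = PM * ev (refs 1) := by
  have h2 := w_sq
  rw [h]
  ext i j
  fin_cases i <;> fin_cases j <;>
    simp [BMat, PM, ev, refs, Matrix.mul_apply, Fin.sum_univ_two]
  · ring
  · ring
  · linear_combination (-1 : ℂ) * h2
  · linear_combination (8 / 9 * ω) * h2

theorem exists_code' (g : GL (Fin 2) ℂ) (hg : g ∈ G4) :
    ∃ x ∈ elts, (g : Matrix (Fin 2) (Fin 2) ℂ) * PM = PM * ev x := by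
  unfold G4 at hg
  induction hg using Subgroup.closure_induction with
  | mem g h =>
    rcases h with h | h
    · exact ⟨refs 0, by decide +kernel, gen_A _ h⟩
    · exact ⟨refs 1, by decide +kernel, gen_B _ h⟩
  | one => exact ⟨oneM, by decide +kernel, by rw [ev_one]; simp⟩
  | mul g h hg hh ig ih =>
    obtain ⟨x, hx, cx⟩ := ig
    obtain ⟨y, hy, cy⟩ := ih
    refine ⟨mulM x y, elts_mul x hx y hy, ?_⟩
    rw [Units.val_mul, ev_mul, Matrix.mul_assoc, cy, ← Matrix.mul_assoc, cx, Matrix.mul_assoc]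
  | inv g hg ig =>
    obtain ⟨x, hx, cx⟩ := ig
    obtain ⟨y, hy, e⟩ := elts_inv x hx
    refine ⟨y, hy, ?_⟩
    have h2 : ((g⁻¹ : GL (Fin 2) ℂ) : Matrix (Fin 2) (Fin 2) ℂ) * (g : Matrix (Fin 2) (Fin 2) ℂ) = 1 :=
      Units.inv_mul g
    have h3 : ev x * ev y = 1 := by rw [← ev_mul, e, ev_one]
    generalize ((g⁻¹ : GL (Fin 2) ℂ) : Matrix (Fin 2) (Fin 2) ℂ) = N at h2 ⊢
    calc N * PM = N * (PM * (ev x * ev y)) := by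
          rw [h3, Matrix.mul_one]
      _ = N * (g : Matrix (Fin 2) (Fin 2) ℂ) * PM * ev y := by
          rw [← Matrix.mul_assoc PM, ← cx]; simp only [Matrix.mul_assoc]
      _ = PM * ev y := by rw [h2, Matrix.one_mul]

theorem exists_code (g : G4) : ∃ x ∈ elts, Code g x := exists_code' g.1 g.2

theorem exists_ref {t : G4} (ht : IsReflection t) : ∃ i, Code t (refs i) := by
  obtain ⟨x, hx, cx⟩ := exists_code t
  have h1 : x ≠ oneM := by
    rintro rfl
    exact ht.1 (cx.inj Code.one)
  have h2 : (ev x - 1).det = 0 := by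
    have e : (mat t - 1) * PM = PM * (ev x - 1) := by
      rw [Matrix.sub_mul, Matrix.mul_sub, Matrix.one_mul, Matrix.mul_one, show mat t * PM = _ from cx]
    have := congrArg Matrix.det e
    rw [Matrix.det_mul, Matrix.det_mul, ht.2, zero_mul] at this
    exact (mul_eq_zero.1 this.symm).resolve_left PM_det.ne_zero
  have h3 : chi x = (0, 0) := by
    have := int_w (chi x).1 (chi x).2 (by
      rw [← h2]
      simp only [Matrix.det_fin_two, ev, chi, Matrix.sub_apply]
      simp
      linear_combination (-x.a' * x.d' + x.b' * x.c' : ℂ) * w_sq)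
    exact Prod.ext this.1 this.2
  obtain ⟨i, rfl⟩ := elts_ref x hx h1 h3
  exact ⟨i, cx⟩

theorem Code.conj {s t : G4} {x y : Fin 8} (hs : Code s (refs x)) (ht : Code t (refs y)) :
    Code (t⁻¹ * s * t) (refs (op x y)) := by
  obtain ⟨z, _, cz⟩ := exists_code (t⁻¹)
  have h1 := (hs.mul ht)
  rw [← refs_op] at h1
  have h2 : Code (t⁻¹ * (s * t)) _ := cz.mul h1
  rw [mul_assoc]
  have h3 : ev z * ev (refs y) = 1 := by
    rw [← ev_mul, ← ev_one]
    congr 1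
    have := cz.mul ht
    rw [inv_mul_cancel] at this
    exact this.ev_eq Code.one
  unfold Code at *
  rw [h2, ev_mul, ev_mul, ← Matrix.mul_assoc (ev z), h3, Matrix.one_mul]

/-- Hurwitz move on lists. -/
inductive LM : List G4 → List G4 → Prop
  | mk (p : List G4) (x y : G4) (q : List G4) :
      LM (p ++ x :: y :: q) (p ++ y :: (y⁻¹ * x * y) :: q)

theorem LM.cons {l l' : List G4} (h : LM l l') (x : G4) : LM (x :: l) (x :: l') := by
  cases h with
  | mk p a b q => exact LM.mk (x :: p) a b q

theorem LM.append {l l' : List G4} (h : LM l l') (r : List G4) : LM (l ++ r) (l' ++ r) := by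
  cases h with
  | mk p a b q => simpa using LM.mk p a b (q ++ r)

def LPair (l : List G4) : Prop := ∃ p x q, l = p ++ x :: x :: q

def LGood (l : List G4) : Prop := ∃ l', Relation.ReflTransGen LM l l' ∧ LPair l'

theorem LGood.append {l : List G4} (h : LGood l) (r : List G4) : LGood (l ++ r) := by
  obtain ⟨l', h1, p, x, q, h2⟩ := h
  exact ⟨l' ++ r, h1.lift (· ++ r) (fun _ _ h => h.append r), p, x, q ++ r, by simp [h2]⟩

abbrev Rel (l : List G4) (c : List (Fin 8)) : Prop := List.Forall₂ (fun g x => Code g (refs x)) l c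

theorem pair_of : ∀ (c : List (Fin 8)) (l : List G4), Rel l c → hasPair c = true → LPair l
  | [], _, _, h => by simp [hasPair] at h
  | [_], _, _, h => by simp [hasPair] at h
  | x :: y :: c, _, .cons (a := g) hg (.cons (a := g') hg' hr), h => by
    rw [hasPair, Bool.or_eq_true] at h
    rcases h with h | h
    · have e : x = y := Fin.ext (Nat.eq_of_beq_eq_true h)
      subst e
      have := hg.inj hg'
      subst this
      exact ⟨[], g, _, rfl⟩
    · obtain ⟨p, z, q, e⟩ := pair_of (y :: c) _ (.cons hg' hr) h
      exact ⟨g :: p, z, q, by rw [e]; rfl⟩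

theorem mv_of {α : Type} : ∀ (i : ℕ) (c : List (Fin 8)) (k : List (Fin 8) → α) (l : List G4), Rel l c →
    ∃ l' c', Relation.ReflTransGen LM l l' ∧ Rel l' c' ∧ mv i c k = k c'
  | 0, [], _, l, h => ⟨l, [], .refl, h, rfl⟩
  | 0, [x], _, l, h => ⟨l, [x], .refl, h, rfl⟩
  | 0, x :: y :: c, _, _, .cons (a := g) hg (.cons (a := g') (l₁ := l) hg' hr) =>
    ⟨_, y :: op x y :: c, .single (LM.mk [] g g' l), .cons hg' (.cons (hg.conj hg') hr),
      by rw [mv]⟩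
  | _ + 1, [], _, l, h => ⟨l, [], .refl, h, rfl⟩
  | i + 1, x :: c, k, _, .cons (a := g) hg hr => by
    obtain ⟨l', c', h1, h2, h3⟩ := mv_of i c (fun r => k (x :: r)) _ hr
    exact ⟨g :: l', x :: c', h1.lift (g :: ·) (fun _ _ h => h.cons g), .cons hg h2, by rw [mv, h3]⟩

theorem run_of : ∀ (w : List ℕ) (c : List (Fin 8)) (l : List G4), Rel l c → run w c = true → LGood l
  | [], c, l, hr, h => ⟨l, .refl, pair_of c l hr h⟩
  | i :: w, c, l, hr, h => by
    obtain ⟨l', c', h1, h2, h3⟩ := mv_of i c (fun r => run w r) l hr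
    rw [run, h3] at h
    obtain ⟨l'', h4, h5⟩ := run_of w c' l' h2 h
    exact ⟨l'', h1.trans h4, h5⟩

theorem srch_of (ws : List (List ℕ)) (c : List (Fin 8)) (l : List G4) (hr : Rel l c)
    (h : srch ws c = true) : LGood l := by
  obtain ⟨w, _, h'⟩ := List.any_eq_true.1 h
  exact run_of w c l hr h'

theorem list_good (l : List G4) (hl : 4 ≤ l.length) (hr : ∀ g ∈ l, IsReflection g)
    (hp : l.prod ≠ 1) : LGood l := by
  match l, hl with
  | g1 :: g2 :: g3 :: g4 :: r, _ =>
    obtain ⟨a, ha⟩ := exists_ref (hr g1 (by simp))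
    obtain ⟨b, hb⟩ := exists_ref (hr g2 (by simp))
    obtain ⟨c, hc⟩ := exists_ref (hr g3 (by simp))
    obtain ⟨d, hd⟩ := exists_ref (hr g4 (by simp))
    rcases main_check a b c with h | h
    · exact (srch_of _ _ [g1, g2, g3] (.cons ha (.cons hb (.cons hc .nil))) h).append (g4 :: r)
    rcases h d with h | ⟨h, h'⟩
    · exact (srch_of _ _ [g1, g2, g3, g4] (.cons ha (.cons hb (.cons hc (.cons hd .nil)))) h).append r
    · rcases r with _ | ⟨g5, r⟩
      · exfalso
        apply hp
        have := ((ha.mul hb).mul hc).mul hd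
        rw [h] at this
        simpa [mul_assoc] using this.inj Code.one
      · obtain ⟨e, he⟩ := exists_ref (hr g5 (by simp))
        exact (srch_of _ _ [g1, g2, g3, g4, g5]
          (.cons ha (.cons hb (.cons hc (.cons hd (.cons he .nil))))) (h' e)).append r

theorem LM.len {l l' : List G4} (h : LM l l') : l'.length = l.length := by
  cases h; simp

theorem LM.hurwitz {l l' : List G4} {k : ℕ} (h : LM l l') (e : l.length = k) (e' : l'.length = k) :
    IsHurwitzMove (fun i : Fin k => l[i.val]'(e ▸ i.isLt)) (fun i : Fin k => l'[i.val]'(e' ▸ i.isLt)) := by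
  cases h with
  | mk p x y q =>
    refine ⟨p.length, by simp at e; omega, ?_, ?_, ?_⟩
    · simp
    · simp [List.getElem_append]
    · intro j h1 h2
      simp only [List.getElem_append]
      split
      · rfl
      · obtain ⟨n, hn⟩ : ∃ n, j.val - p.length = n + 2 := ⟨j.val - p.length - 2, by omega⟩
        simp [hn]

theorem orbit_of {l l' : List G4} {k : ℕ} (h : Relation.ReflTransGen LM l l') (e : l.length = k) :
    ∃ e' : l'.length = k, SameHurwitzOrbit (fun i : Fin k => l[i.val]'(e ▸ i.isLt))
      (fun i : Fin k => l'[i.val]'(e' ▸ i.isLt)) := by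
  induction h with
  | refl => exact ⟨e, .refl _⟩
  | tail _ h ih =>
    obtain ⟨e', ih⟩ := ih
    have e'' := h.len.trans e'
    exact ⟨e'', .trans _ _ _ ih (.rel _ _ (h.hurwitz e' e''))⟩

end M8

theorem g4_length_ge_four_both_classes_pair (k : ℕ) (hk : 4 ≤ k)
    (c : G4) (hc : IsCoxeter c) (t : Fin k → G4)
    (ht : ∀ i, IsReflection (t i)) (hp : (List.ofFn t).prod = c)
    (hR1 : ∃ i, t i ∈ R1) (hR2 : ∃ i, t i ∈ R2) :
    ∃ s : Fin k → G4, SameHurwitzOrbit t s ∧ HasConsecutiveEqualPair s := by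
  have hc1 : c ≠ 1 := by
    rintro rfl
    obtain ⟨ζ, hz, hd⟩ := hc
    have : (1 - ζ) * (1 - ζ) = 0 := by
      rw [← hd, Matrix.det_fin_two]
      simp [mat]
    have h1 : ζ = 1 := by
      rcases mul_eq_zero.1 this with h | h <;> exact (sub_eq_zero.1 h).symm
    exact hz.ne_one (by norm_num) h1
  obtain ⟨l', h1, p, x, q, h2⟩ := M8.list_good (List.ofFn t) (by simpa using hk)
    (by intro g hg; obtain ⟨i, rfl⟩ := (List.mem_ofFn' _ _).1 hg; exact ht i) (by rw [hp]; exact hc1)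
  obtain ⟨e', h3⟩ := M8.orbit_of h1 (List.length_ofFn (f := t))
  refine ⟨_, by simpa using h3, ?_⟩
  subst h2
  refine ⟨p.length, by simp at e'; omega, ?_⟩
  simp [List.getElem_append]
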